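/- Let n ≥ 2 and let a₁,…,aₙ be nonzero integers with at least one positive and at least one negative. Let A ⊆ ℂ[z₁,…,zₙ,w₁,…,wₙ] be the subalgebra spanned by the monomials z^α w^β with Σᵢ aᵢ(αᵢ − βᵢ) = 0 (the invariants of the ℂˣ-action with weights (a₁,…,aₙ,−a₁,…,−aₙ)), and let f = Σᵢ aᵢ zᵢ wᵢ ∈ A (the complexified moment map). Then the quotient ℂ-algebra A/(f·A) is not isomorphic, as a ℂ-algebra, to a polynomial algebra ℂ[x₁,…,x_k] for any k. -/

import Mathlib

/-!
Statement 1: For n ≥ 2 and nonzero weights with both signs, the invariant algebra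
`A ⊆ ℂ[z,w]` of the weighted ℂˣ-action (weights (a, -a)) modulo the ideal generated by the
complexified moment map `f = Σ aᵢ zᵢ wᵢ` is not isomorphic to any polynomial algebra.
-/

namespace Stmt1

open MvPolynomial

/-- The weight of a monomial exponent `d` (variables `Sum.inl i` are `zᵢ` with weight `aᵢ`,
variables `Sum.inr i` are `wᵢ` with weight `-aᵢ`). -/
def wt (n : ℕ) (a : Fin n → ℤ) (d : (Fin n ⊕ Fin n) →₀ ℕ) : ℤ :=
  ∑ i, a i * ((d (Sum.inl i) : ℤ) - (d (Sum.inr i) : ℤ))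

theorem wt_add (n : ℕ) (a : Fin n → ℤ) (d e : (Fin n ⊕ Fin n) →₀ ℕ) :
    wt n a (d + e) = wt n a d + wt n a e := by
  simp only [wt, Finsupp.add_apply]
  rw [← Finset.sum_add_distrib]
  apply Finset.sum_congr rfl
  intro i _
  push_cast
  ring

/-- The subalgebra `A` of `ℂ[z₁,…,zₙ,w₁,…,wₙ]` spanned by the monomials `z^α w^β` with
`Σᵢ aᵢ(αᵢ − βᵢ) = 0`, i.e. the invariants of the ℂˣ-action with weights `(a, -a)`. -/
noncomputable def A (n : ℕ) (a : Fin n → ℤ) : Subalgebra ℂ (MvPolynomial (Fin n ⊕ Fin n) ℂ) where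
  carrier := {p | ∀ d ∈ p.support, wt n a d = 0}
  mul_mem' := by
    intro p q hp hq d hd
    have := MvPolynomial.support_mul p q hd
    rw [Finset.mem_add] at this
    obtain ⟨d₁, hd₁, d₂, hd₂, rfl⟩ := this
    rw [wt_add, hp d₁ hd₁, hq d₂ hd₂, add_zero]
  add_mem' := by
    intro p q hp hq d hd
    rcases Finset.mem_union.mp (MvPolynomial.support_add hd) with h | h
    · exact hp d h
    · exact hq d h
  one_mem' := by
    intro d hd
    rw [show (1 : MvPolynomial (Fin n ⊕ Fin n) ℂ) = MvPolynomial.monomial 0 1 by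
      rw [MvPolynomial.monomial_zero', map_one]] at hd
    have : d = 0 := by simpa using MvPolynomial.support_monomial_subset hd
    subst this
    simp [wt]
  zero_mem' := by
    intro d hd
    simp at hd
  algebraMap_mem' := by
    intro c d hd
    rw [MvPolynomial.algebraMap_eq, MvPolynomial.C_apply] at hd
    have : d = 0 := by simpa using MvPolynomial.support_monomial_subset hd
    subst this
    simp [wt]

/-- The complexified moment map `f = Σᵢ aᵢ zᵢ wᵢ` as a polynomial. -/
noncomputable def f (n : ℕ) (a : Fin n → ℤ) : MvPolynomial (Fin n ⊕ Fin n) ℂ :=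
  ∑ i, MvPolynomial.C (a i : ℂ) * (MvPolynomial.X (Sum.inl i) * MvPolynomial.X (Sum.inr i))

/-!
Let `ε` be evaluation at the origin on `A/(f)`. When `aₗ ≠ 0`, the exponent of `zₗwₗ` is not a sum
of two nonzero exponents of weight zero, so on `A` the coefficient of `zₗwₗ` is a point derivation
at the origin. Combining these functionals for two indices `i ≠ j` so as to kill `f` shows that
`u = zᵢwᵢ` is not a product of two elements of `ker ε` modulo `f`. If `A/(f)` were factorial, `u`
would therefore be prime up to factors outside `ker ε`. However, `u` divides a product `s t` of two
invariant monomials in `zᵢ, wᵢ, zⱼ, wⱼ`, neither of which is divisible by any `zₗwₗ`; comparing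
coefficients at `s` shows that `u ∣ v s` modulo `f` forces `ε v = 0`, and likewise for `t`.
-/

section Factorization

variable {R K F : Type*} [CommMonoidWithZero R] [UniqueFactorizationMonoid R]
  [CommMonoidWithZero K] [NoZeroDivisors K] [Nontrivial K]
  [FunLike F R K] [MonoidWithZeroHomClass F R K]

theorem exists_prime_dvd_map_eq_zero (ε : F) {u : R} (hu : u ≠ 0) (hεu : ε u = 0) :
    ∃ p, Prime p ∧ p ∣ u ∧ ε p = 0 := by
  obtain ⟨S, hS, hSu⟩ := UniqueFactorizationMonoid.exists_prime_factors u hu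
  have hεS : (S.map ε).prod = 0 := by
    rw [← map_multiset_prod]
    obtain ⟨w, hw⟩ := hSu.symm
    rw [← hw, map_mul, hεu, zero_mul]
  obtain ⟨p, hpS, hεp⟩ := Multiset.mem_map.mp (Multiset.prod_eq_zero_iff.mp hεS)
  exact ⟨p, hS p hpS, (Multiset.dvd_prod hpS).trans hSu.dvd, hεp⟩

/-- In ring language: if `u` lies in `𝔪 = ker ε` but is not a product of two elements of `𝔪`, then
`u` becomes prime after localizing at `𝔪`. -/
theorem exists_map_ne_zero_and_dvd_mul_or_dvd_mul (ε : F) {u s t : R} (hεu : ε u = 0)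
    (hu : ∀ x y, u = x * y → ε x = 0 → ε y ≠ 0) (hst : u ∣ s * t) :
    ∃ v, ε v ≠ 0 ∧ (u ∣ v * s ∨ u ∣ v * t) := by
  have hu0 : u ≠ 0 := fun h => hu 0 0 (by rw [h, mul_zero]) (map_zero ε) (map_zero ε)
  obtain ⟨p, hp, ⟨v, rfl⟩, hεp⟩ := exists_prime_dvd_map_eq_zero ε hu0 hεu
  have hdvd {r : R} (hr : p ∣ r) : p * v ∣ v * r := mul_comm p v ▸ mul_dvd_mul_left v hr
  exact ⟨v, hu p v rfl hεp, (hp.dvd_or_dvd (dvd_of_mul_right_dvd hst)).imp hdvd hdvd⟩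

end Factorization

section Exponents

variable {n : ℕ}

/-- The exponent of the monomial `zₗ wₗ`. -/
noncomputable def pair (l : Fin n) : (Fin n ⊕ Fin n) →₀ ℕ :=
  Finsupp.single (Sum.inl l) 1 + Finsupp.single (Sum.inr l) 1

/-- The exponent of an invariant monomial that mixes the indices `i` and `j`, namely
`zᵢ^b wᵢ^c zⱼ^d wⱼ^e` with `aⱼ = b - c` and `aᵢ = e - d` the decompositions into positive and
negative parts. Swapping `i` and `j` exchanges the roles of `z` and `w`. -/
noncomputable def mixed (a : Fin n → ℤ) (i j : Fin n) : (Fin n ⊕ Fin n) →₀ ℕ :=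
  Finsupp.single (Sum.inl i) (a j).toNat + Finsupp.single (Sum.inr i) (-a j).toNat +
    (Finsupp.single (Sum.inl j) (-a i).toNat + Finsupp.single (Sum.inr j) (a i).toNat)

theorem pair_injective : Function.Injective (pair (n := n)) := by
  intro l m h
  by_contra hlm
  have := DFunLike.congr_fun h (Sum.inl l)
  simp [pair, Ne.symm hlm] at this

theorem pair_ne_zero (l : Fin n) : pair l ≠ 0 := by
  simp [pair]

theorem pair_le_iff {l : Fin n} {d : (Fin n ⊕ Fin n) →₀ ℕ} :
    pair l ≤ d ↔ 0 < d (Sum.inl l) ∧ 0 < d (Sum.inr l) := by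
  constructor
  · intro h
    exact ⟨Nat.succ_le_iff.mp (by simpa [pair] using h (Sum.inl l)),
      Nat.succ_le_iff.mp (by simpa [pair] using h (Sum.inr l))⟩
  · rintro ⟨hz, hw⟩ (m | m) <;> by_cases hm : l = m <;>
      simp_all [pair, Nat.one_le_iff_ne_zero, Nat.pos_iff_ne_zero]

theorem wt_single_inl (a : Fin n → ℤ) (l : Fin n) (m : ℕ) :
    wt n a (Finsupp.single (Sum.inl l) m) = a l * m := by
  simp [wt, Finsupp.single_apply]

theorem wt_single_inr (a : Fin n → ℤ) (l : Fin n) (m : ℕ) :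
    wt n a (Finsupp.single (Sum.inr l) m) = -(a l * m) := by
  simp [wt, Finsupp.single_apply]

theorem wt_pair (a : Fin n → ℤ) (l : Fin n) : wt n a (pair l) = 0 := by
  rw [pair, wt_add, wt_single_inl, wt_single_inr, add_neg_cancel]

theorem wt_mixed (a : Fin n → ℤ) (i j : Fin n) : wt n a (mixed a i j) = 0 := by
  simp only [mixed, wt_add, wt_single_inl, wt_single_inr]
  linear_combination a i * Int.toNat_sub_toNat_neg (a j) - a j * Int.toNat_sub_toNat_neg (a i)

theorem not_pair_le_mixed (a : Fin n → ℤ) {i j : Fin n} (hij : i ≠ j) (l : Fin n) :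
    ¬ pair l ≤ mixed a i j := by
  rw [pair_le_iff]
  simp only [mixed, Finsupp.add_apply, Finsupp.single_apply]
  grind

theorem pair_le_mixed_add_mixed {a : Fin n → ℤ} (i : Fin n) {j : Fin n} (hj : a j ≠ 0) :
    pair i ≤ mixed a i j + mixed a j i := by
  rw [pair_le_iff]
  simp only [mixed, Finsupp.add_apply, Finsupp.single_eq_same]
  omega

theorem eq_zero_or_eq_pair_of_le_pair {a : Fin n → ℤ} {l : Fin n} (hl : a l ≠ 0)
    {d : (Fin n ⊕ Fin n) →₀ ℕ} (hd : d ≤ pair l) (hwt : wt n a d = 0) :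
    d = 0 ∨ d = pair l := by
  have hoff (m : Fin n) (hm : m ≠ l) : d (Sum.inl m) = 0 ∧ d (Sum.inr m) = 0 :=
    ⟨by simpa [pair, hm.symm] using hd (Sum.inl m), by simpa [pair, hm.symm] using hd (Sum.inr m)⟩
  have hzw : d (Sum.inl l) = d (Sum.inr l) := by
    rw [wt, Finset.sum_eq_single l (fun m _ hm => by simp [hoff m hm]) (by simp)] at hwt
    have := (mul_eq_zero.mp hwt).resolve_left hl
    omega
  by_cases hpos : 0 < d (Sum.inl l)
  · exact .inr (hd.antisymm (pair_le_iff.mpr ⟨hpos, hzw ▸ hpos⟩))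
  · refine .inl (Finsupp.ext ?_)
    rintro (m | m) <;> obtain rfl | hm := eq_or_ne m l
    · exact Nat.eq_zero_of_not_pos hpos
    · exact (hoff m hm).1
    · exact hzw ▸ Nat.eq_zero_of_not_pos hpos
    · exact (hoff m hm).2

end Exponents

section Coefficients

variable {n : ℕ} {a : Fin n → ℤ}

theorem f_eq_sum_monomial (a : Fin n → ℤ) : f n a = ∑ l, monomial (pair l) (a l : ℂ) := by
  simp only [f, pair, X, monomial_mul, C_mul_monomial, mul_one]

theorem constantCoeff_f (a : Fin n → ℤ) : constantCoeff (f n a) = 0 := by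
  simp [f]

theorem coeff_pair_f (a : Fin n → ℤ) (l : Fin n) : coeff (pair l) (f n a) = a l := by
  simp [f_eq_sum_monomial, coeff_sum, coeff_monomial, pair_injective.eq_iff]

theorem coeff_f_mul_eq_zero {d : (Fin n ⊕ Fin n) →₀ ℕ} (hd : ∀ l, ¬ pair l ≤ d)
    (G : MvPolynomial (Fin n ⊕ Fin n) ℂ) : coeff d (f n a * G) = 0 := by
  simp [f_eq_sum_monomial, Finset.sum_mul, coeff_sum, coeff_monomial_mul', hd]

theorem coeff_pair_mul {l : Fin n} (hl : a l ≠ 0) {P Q : MvPolynomial (Fin n ⊕ Fin n) ℂ}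
    (hP : P ∈ A n a) :
    coeff (pair l) (P * Q) =
      constantCoeff P * coeff (pair l) Q + coeff (pair l) P * constantCoeff Q := by
  rw [coeff_mul, Finset.sum_eq_add_of_mem (0, pair l) (pair l, 0) (by simp) (by simp)
    (by simp [(pair_ne_zero l).symm])]
  · simp only [constantCoeff_eq]
  · rintro ⟨d, e⟩ hde ⟨hne₀, hne₁⟩
    have hsum : d + e = pair l := Finset.HasAntidiagonal.mem_antidiagonal.mp hde
    have hd : coeff d P = 0 := by
      by_contra hd
      have hle : d ≤ pair l := hsum ▸ le_self_add
      rcases eq_zero_or_eq_pair_of_le_pair hl hle (hP d (mem_support_iff.mpr hd)) with rfl | rfl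
      · exact hne₀ (by rw [← hsum, zero_add])
      · exact hne₁ (by rw [left_eq_add.mp hsum.symm])
    rw [hd, zero_mul]

/-- The monomial `z^α w^β` of weight zero with exponent `d = (α, β)`, as an invariant. -/
noncomputable def invMonomial (d : (Fin n ⊕ Fin n) →₀ ℕ) (hd : wt n a d = 0) : A n a :=
  ⟨monomial d 1, fun e he => by
    rwa [Finset.mem_singleton.mp (support_monomial_subset he)]⟩

theorem coe_invMonomial {d : (Fin n ⊕ Fin n) →₀ ℕ} (hd : wt n a d = 0) :
    (invMonomial d hd : MvPolynomial (Fin n ⊕ Fin n) ℂ) = monomial d 1 :=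
  rfl

theorem invMonomial_mul {d e : (Fin n ⊕ Fin n) →₀ ℕ} (hd : wt n a d = 0) (he : wt n a e = 0) :
    invMonomial d hd * invMonomial e he =
      invMonomial (d + e) (by rw [wt_add, hd, he, add_zero]) :=
  Subtype.ext (by simp [coe_invMonomial, monomial_mul])

theorem invMonomial_dvd {d e : (Fin n ⊕ Fin n) →₀ ℕ} (hd : wt n a d = 0) (he : wt n a e = 0)
    (hle : d ≤ e) : invMonomial d hd ∣ invMonomial e he := by
  obtain ⟨c, rfl⟩ := exists_add_of_le hle
  have hc : wt n a c = 0 := by rwa [wt_add, hd, zero_add] at he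
  exact ⟨invMonomial c hc, (invMonomial_mul hd hc).symm⟩

end Coefficients

section Quotient

variable {n : ℕ} {a : Fin n → ℤ} {fA : A n a}

theorem exists_eq_add_f_mul_of_mk_eq (hfA : (fA : MvPolynomial (Fin n ⊕ Fin n) ℂ) = f n a)
    {x y : A n a} (h : Ideal.Quotient.mk (Ideal.span {fA}) x = Ideal.Quotient.mk _ y) :
    ∃ g : A n a, (x : MvPolynomial (Fin n ⊕ Fin n) ℂ) = y + f n a * g := by
  obtain ⟨g, hg⟩ := Ideal.mem_span_singleton.mp (Ideal.Quotient.eq.mp h)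
  refine ⟨g, ?_⟩
  rw [← hfA, ← MulMemClass.coe_mul, ← hg, AddSubgroupClass.coe_sub, add_sub_cancel]

/-- Evaluation at the origin `z = w = 0`, as a ring homomorphism on `A/(f)`. -/
noncomputable def evalOrigin (hfA : (fA : MvPolynomial (Fin n ⊕ Fin n) ℂ) = f n a) :
    (A n a ⧸ Ideal.span {fA}) →+* ℂ :=
  Ideal.Quotient.lift _ (constantCoeff.comp (A n a).val.toRingHom) <| by
    intro x hx
    obtain ⟨y, rfl⟩ := Ideal.mem_span_singleton.mp hx
    simp [hfA, constantCoeff_f]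

theorem evalOrigin_mk (hfA : (fA : MvPolynomial (Fin n ⊕ Fin n) ℂ) = f n a) (x : A n a) :
    evalOrigin hfA (Ideal.Quotient.mk _ x) =
      constantCoeff (x : MvPolynomial (Fin n ⊕ Fin n) ℂ) :=
  rfl

theorem evalOrigin_ne_zero_of_mk_pair_eq_mul
    (hfA : (fA : MvPolynomial (Fin n ⊕ Fin n) ℂ) = f n a) {i j : Fin n} (hij : i ≠ j)
    (hi : a i ≠ 0) (hj : a j ≠ 0) {x y : A n a ⧸ Ideal.span {fA}}
    (hxy : Ideal.Quotient.mk _ (invMonomial (pair i) (wt_pair a i)) = x * y)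
    (hx : evalOrigin hfA x = 0) : evalOrigin hfA y ≠ 0 := by
  intro hy
  obtain ⟨x, rfl⟩ := Ideal.Quotient.mk_surjective x
  obtain ⟨y, rfl⟩ := Ideal.Quotient.mk_surjective y
  rw [evalOrigin_mk] at hx hy
  obtain ⟨g, hg⟩ := exists_eq_add_f_mul_of_mk_eq hfA (hxy.trans (map_mul _ x y).symm)
  have hcoeff (l : Fin n) (hl : a l ≠ 0) :
      coeff (pair l) (monomial (pair i) (1 : ℂ)) =
        a l * constantCoeff (g : MvPolynomial (Fin n ⊕ Fin n) ℂ) := by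
    have := congrArg (coeff (pair l)) hg
    simpa only [coe_invMonomial, MulMemClass.coe_mul, coeff_add, coeff_pair_mul hl x.2,
      coeff_pair_mul hl (hfA ▸ fA.2), hx, hy, constantCoeff_f, coeff_pair_f, zero_mul, mul_zero,
      zero_add] using this
  have hg0 : constantCoeff (g : MvPolynomial (Fin n ⊕ Fin n) ℂ) = 0 := by
    have := hcoeff j hj
    rw [coeff_monomial, if_neg (pair_injective.ne hij)] at this
    exact (mul_eq_zero.mp this.symm).resolve_left (Int.cast_ne_zero.mpr hj)
  have := hcoeff i hi
  rw [coeff_monomial, if_pos rfl, hg0, mul_zero] at this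
  exact one_ne_zero this

theorem evalOrigin_eq_zero_of_mk_pair_dvd_mul
    (hfA : (fA : MvPolynomial (Fin n ⊕ Fin n) ℂ) = f n a) (i : Fin n)
    {d : (Fin n ⊕ Fin n) →₀ ℕ} (hd : wt n a d = 0) (hpair : ∀ l, ¬ pair l ≤ d)
    {v : A n a ⧸ Ideal.span {fA}}
    (hdvd : Ideal.Quotient.mk _ (invMonomial (pair i) (wt_pair a i)) ∣
      v * Ideal.Quotient.mk _ (invMonomial d hd)) :
    evalOrigin hfA v = 0 := by
  obtain ⟨c, hc⟩ := hdvd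
  obtain ⟨v, rfl⟩ := Ideal.Quotient.mk_surjective v
  obtain ⟨c, rfl⟩ := Ideal.Quotient.mk_surjective c
  rw [← map_mul, ← map_mul] at hc
  obtain ⟨g, hg⟩ := exists_eq_add_f_mul_of_mk_eq hfA hc
  rw [MulMemClass.coe_mul, MulMemClass.coe_mul, coe_invMonomial, coe_invMonomial] at hg
  rw [evalOrigin_mk, constantCoeff_eq]
  calc coeff 0 (v : MvPolynomial (Fin n ⊕ Fin n) ℂ)
      = coeff d ((v : MvPolynomial (Fin n ⊕ Fin n) ℂ) * monomial d 1) := by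
        simp [coeff_mul_monomial']
    _ = coeff d (monomial (pair i) 1 * (c : MvPolynomial (Fin n ⊕ Fin n) ℂ)) +
          coeff d (f n a * (g : MvPolynomial (Fin n ⊕ Fin n) ℂ)) := by
        rw [hg, coeff_add]
    _ = 0 := by
        rw [coeff_monomial_mul', if_neg (hpair i), coeff_f_mul_eq_zero hpair, add_zero]

theorem quotient_not_polynomial_algebra_general {i j : Fin n} (hij : i ≠ j)
    (hi : a i ≠ 0) (hj : a j ≠ 0) (hfA : (fA : MvPolynomial (Fin n ⊕ Fin n) ℂ) = f n a) :
    ¬ UniqueFactorizationMonoid (A n a ⧸ Ideal.span {fA}) := by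
  intro _
  let π := Ideal.Quotient.mk (Ideal.span {fA})
  let u := invMonomial (pair i) (wt_pair a i)
  let s := invMonomial (mixed a i j) (wt_mixed a i j)
  let t := invMonomial (mixed a j i) (wt_mixed a j i)
  have hu : evalOrigin hfA (π u) = 0 := by
    rw [evalOrigin_mk, coe_invMonomial, constantCoeff_monomial, if_neg (pair_ne_zero i)]
  have hust : π u ∣ π s * π t := by
    rw [← map_mul, invMonomial_mul]
    exact map_dvd π (invMonomial_dvd _ _ (pair_le_mixed_add_mixed i hj))
  obtain ⟨v, hv, hs | ht⟩ := exists_map_ne_zero_and_dvd_mul_or_dvd_mul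
    (evalOrigin hfA) hu (fun _ _ => evalOrigin_ne_zero_of_mk_pair_eq_mul hfA hij hi hj) hust
  · exact hv (evalOrigin_eq_zero_of_mk_pair_dvd_mul hfA i _ (not_pair_le_mixed a hij) hs)
  · exact hv (evalOrigin_eq_zero_of_mk_pair_dvd_mul hfA i _ (not_pair_le_mixed a hij.symm) ht)

end Quotient

/-- The quotient `A/(f·A)` of the invariant algebra by the ideal generated by the
complexified moment map is not a polynomial algebra. -/
theorem quotient_not_polynomial_algebra
    (n : ℕ) (hn : 2 ≤ n) (a : Fin n → ℤ) (ha : ∀ i, a i ≠ 0)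
    (hpos : ∃ i, 0 < a i) (hneg : ∃ j, a j < 0)
    (fA : A n a) (hfA : (fA : MvPolynomial (Fin n ⊕ Fin n) ℂ) = f n a) :
    ¬ ∃ k : ℕ, Nonempty ((A n a ⧸ Ideal.span {fA}) ≃ₐ[ℂ] MvPolynomial (Fin k) ℂ) := by
  rintro ⟨k, ⟨e⟩⟩
  obtain ⟨⟨i, hi⟩, ⟨j, hj⟩⟩ := And.intro hpos hneg
  exact quotient_not_polynomial_algebra_general (by rintro rfl; exact lt_asymm hi hj) hi.ne' hj.ne
    hfA (e.symm.toMulEquiv.uniqueFactorizationMonoid inferInstance)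

end Stmt1
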